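/- Every finite solvable SST-group is a BT-group. -/

import Mathlib

open scoped Pointwise

section Defs

variable {G : Type*} [Group G]

/-- `K` is an SS-permutable supplement of `H` in `G`: `HK = G` and `H` permutes with
every Sylow subgroup of `K`. -/
def IsSSSupplement (H K : Subgroup G) : Prop :=
  (H : Set G) * (K : Set G) = Set.univ ∧
    ∀ (p : ℕ) [Fact p.Prime] (P : Sylow p K),
      (H : Set G) * ((P.toSubgroup.map K.subtype : Subgroup G) : Set G) =
        ((P.toSubgroup.map K.subtype : Subgroup G) : Set G) * (H : Set G)

/-- `H` is SS-permutable in `G`: `H` has a supplement `K` such that `H` permutes with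
every Sylow subgroup of `K`. -/
def IsSSPermutable (H : Subgroup G) : Prop :=
  ∃ K : Subgroup G, IsSSSupplement H K

/-- `H` is NSS-permutable in `G`: `H` has a normal supplement `K` such that `H` permutes
with every Sylow subgroup of `K`. -/
def IsNSSPermutable (H : Subgroup G) : Prop :=
  ∃ K : Subgroup G, K.Normal ∧ IsSSSupplement H K

/-- `H` is S-permutable in `G`: it permutes with every Sylow subgroup of `G`. -/
def IsSPermutable (H : Subgroup G) : Prop :=
  ∀ (p : ℕ) [Fact p.Prime] (P : Sylow p G),
    (H : Set G) * ((P : Subgroup G) : Set G) = ((P : Subgroup G) : Set G) * (H : Set G)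

/-- `H` is semipermutable in `G`: `HX = XH` for every subgroup `X` with `gcd(|H|,|X|) = 1`. -/
def IsSemipermutable (H : Subgroup G) : Prop :=
  ∀ X : Subgroup G, Nat.Coprime (Nat.card H) (Nat.card X) →
    (H : Set G) * (X : Set G) = (X : Set G) * (H : Set G)

/-- `H` is S-semipermutable in `G`: `HQ = QH` for every Sylow `q`-subgroup `Q` of `G`
with `q` a prime not dividing `|H|`. -/
def IsSSemipermutable (H : Subgroup G) : Prop :=
  ∀ (q : ℕ) [Fact q.Prime], ¬ q ∣ Nat.card H → ∀ Q : Sylow q G,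
    (H : Set G) * ((Q : Subgroup G) : Set G) = ((Q : Subgroup G) : Set G) * (H : Set G)

end Defs

/-- `G` is an SST-group: SS-permutability is a transitive relation. -/
def IsSSTGroup (G : Type*) [Group G] : Prop :=
  ∀ H K : Subgroup G, H ≤ K → IsSSPermutable (H.subgroupOf K) → IsSSPermutable K →
    IsSSPermutable H

/-- `G` is an NSST-group: NSS-permutability is a transitive relation. -/
def IsNSSTGroup (G : Type*) [Group G] : Prop :=
  ∀ H K : Subgroup G, H ≤ K → IsNSSPermutable (H.subgroupOf K) → IsNSSPermutable K →
    IsNSSPermutable H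

/-- `G` is a PST-group: S-permutability is a transitive relation. -/
def IsPSTGroup (G : Type*) [Group G] : Prop :=
  ∀ H K : Subgroup G, H ≤ K → IsSPermutable (H.subgroupOf K) → IsSPermutable K →
    IsSPermutable H

/-- `G` is a BT-group: semipermutability is a transitive relation. -/
def IsBTGroup (G : Type*) [Group G] : Prop :=
  ∀ H K : Subgroup G, H ≤ K → IsSemipermutable (H.subgroupOf K) → IsSemipermutable K →
    IsSemipermutable H

section Permuting

variable {G : Type*} [Group G]

/-- Two subgroups whose product set is a subgroup permute. -/
theorem mul_comm_of_coe_eq_mul {H K L : Subgroup G} (h : (L : Set G) = (H : Set G) * K) :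
    (H : Set G) * K = (K : Set G) * H := by
  calc (H : Set G) * K = (L : Set G)⁻¹ := by rw [inv_coe_set, h]
    _ = (K : Set G) * H := by rw [h, mul_inv_rev, inv_coe_set, inv_coe_set]

/-- The product set of two permuting subgroups is their join. -/
theorem coe_sup_of_mul_comm {H K : Subgroup G} (h : (H : Set G) * K = (K : Set G) * H) :
    ((H ⊔ K : Subgroup G) : Set G) = (H : Set G) * K := by
  let L : Subgroup G :=
    { carrier := (H : Set G) * K
      one_mem' := ⟨1, H.one_mem, 1, K.one_mem, mul_one 1⟩
      mul_mem' := fun {a b} ha hb => by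
        have hab : a * b ∈ ((H : Set G) * K) * ((H : Set G) * K) := Set.mul_mem_mul ha hb
        rwa [mul_assoc, ← mul_assoc (K : Set G), ← h, mul_assoc, coe_mul_coe, ← mul_assoc,
          coe_mul_coe] at hab
      inv_mem' := fun {a} ha => by
        have ha' : a⁻¹ ∈ ((H : Set G) * K)⁻¹ := Set.inv_mem_inv.2 ha
        rwa [mul_inv_rev, inv_coe_set, inv_coe_set, ← h] at ha' }
  refine Set.Subset.antisymm ?_ ?_
  · have hL : H ⊔ K ≤ L := sup_le
      (fun x hx => ⟨x, hx, 1, K.one_mem, mul_one x⟩)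
      (fun x hx => ⟨1, H.one_mem, x, hx, one_mul x⟩)
    exact hL
  · rintro _ ⟨a, ha, b, hb, rfl⟩
    exact Subgroup.mul_mem_sup ha hb

/-- A subgroup permuting with every member of a family permutes with their join. -/
theorem mul_iSup_comm {ι : Sort*} {H : Subgroup G} {S : ι → Subgroup G}
    (h : ∀ i, (H : Set G) * S i = (S i : Set G) * H) :
    (H : Set G) * (⨆ i, S i : Subgroup G) = ((⨆ i, S i : Subgroup G) : Set G) * H := by
  have hle : (H : Set G) * (⨆ i, S i : Subgroup G) ⊆ ((⨆ i, S i : Subgroup G) : Set G) * H := by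
    rintro _ ⟨a, ha, x, hx, rfl⟩
    induction hx using Subgroup.iSup_induction' generalizing a with
    | hp i x hx =>
      have hax : a * x ∈ (S i : Set G) * H := h i ▸ Set.mul_mem_mul ha hx
      exact Set.mul_subset_mul_right (le_iSup S i) hax
    | h1 => exact ⟨1, one_mem _, a, ha, by simp⟩
    | hmul x y hx hy ihx ihy =>
      obtain ⟨t, ht, b, hb, htb⟩ := ihx a ha
      obtain ⟨u, hu, c, hc, huc⟩ := ihy b hb
      refine ⟨t * u, mul_mem ht hu, c, hc, ?_⟩
      simp only at htb huc ⊢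
      rw [mul_assoc, huc, ← mul_assoc, htb, mul_assoc]
  refine hle.antisymm ?_
  have hinv := Set.inv_subset_inv.2 hle
  rwa [mul_inv_rev, mul_inv_rev, inv_coe_set, inv_coe_set] at hinv

/-- The product formula for two subgroups. -/
theorem ncard_coe_mul_coe (H K : Subgroup G) :
    ((H : Set G) * K).ncard = Nat.card K * K.relIndex H := by
  have hcard := Subgroup.card_mul_eq_card_subgroup_mul_card_quotient K (H : Set G)
  rw [← Nat.card_coe_set_eq, hcard]
  congr 1
  have horb : (QuotientGroup.mk '' (H : Set G) : Set (G ⧸ K)) =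
      MulAction.orbit H ((1 : G) : G ⧸ K) := by
    ext x
    constructor
    · rintro ⟨a, ha, rfl⟩
      exact ⟨⟨a, ha⟩, congrArg QuotientGroup.mk (mul_one a)⟩
    · rintro ⟨⟨a, ha⟩, rfl⟩
      exact ⟨a, ha, congrArg QuotientGroup.mk (mul_one a).symm⟩
  have hstab : MulAction.stabilizer H ((1 : G) : G ⧸ K) = K.subgroupOf H := by
    ext x
    have hx : x • ((1 : G) : G ⧸ K) = ((x : G) : G ⧸ K) := congrArg QuotientGroup.mk (mul_one _)
    rw [MulAction.mem_stabilizer_iff, Subgroup.mem_subgroupOf, hx, eq_comm, QuotientGroup.eq,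
      inv_one, one_mul]
  rw [Subgroup.relIndex, ← hstab, MulAction.index_stabilizer, horb, Nat.card_coe_set_eq]

/-- The product formula for two subgroups of coprime orders. -/
theorem ncard_coe_mul_coe_of_coprime {H K : Subgroup G}
    (h : (Nat.card H).Coprime (Nat.card K)) :
    ((H : Set G) * K).ncard = Nat.card H * Nat.card K := by
  rw [ncard_coe_mul_coe, ← Subgroup.inf_relIndex_right,
    (Subgroup.disjoint_of_coprime_natCard h.symm).eq_bot, Subgroup.relIndex_bot_left, mul_comm]

variable [Finite G]

/-- The index of a supplement of `H` divides the order of `H`. -/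
theorem index_dvd_card_of_mul_eq_univ {H K : Subgroup G}
    (h : (H : Set G) * (K : Set G) = Set.univ) :
    K.index ∣ Nat.card H := by
  have hcard := ncard_coe_mul_coe H K
  rw [h, Set.ncard_univ, ← K.card_mul_index] at hcard
  rw [Nat.eq_of_mul_eq_mul_left Nat.card_pos hcard]
  exact Subgroup.relIndex_dvd_card _ _

/-- Two subgroups of coprime indices supplement each other. -/
theorem mul_eq_univ_of_coprime_index {H K : Subgroup G} (h : H.index.Coprime K.index) :
    (H : Set G) * (K : Set G) = Set.univ := by
  have hdvd : K.index ∣ K.relIndex H := by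
    refine h.symm.dvd_of_dvd_mul_right ?_
    rw [← Subgroup.inf_relIndex_right, Subgroup.relIndex_mul_index inf_le_right]
    exact Subgroup.index_dvd_of_le inf_le_left
  refine Set.eq_of_subset_of_ncard_le (Set.subset_univ _) ?_ Set.finite_univ
  rw [ncard_coe_mul_coe, Set.ncard_univ, ← K.card_mul_index]
  refine Nat.mul_le_mul_left _ (Nat.le_of_dvd (Nat.pos_of_ne_zero ?_) hdvd)
  exact Subgroup.index_ne_zero_of_finite

/-- A finite group is generated by its Sylow subgroups. -/
theorem iSup_sylow_eq_top :
    ⨆ (p : ℕ) (_ : Fact p.Prime) (P : Sylow p G), (P : Subgroup G) = ⊤ := by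
  rw [← Subgroup.index_eq_one, Nat.eq_one_iff_not_exists_prime_dvd]
  intro p hp hdvd
  have hfact : Fact p.Prime := ⟨hp⟩
  let P : Sylow p G := default
  refine P.not_dvd_index (hdvd.trans (Subgroup.index_dvd_of_le ?_))
  exact le_iSup_of_le p (le_iSup_of_le hfact (le_iSup (fun P : Sylow p G => (P : Subgroup G)) P))

/-- A subgroup permuting with every Sylow subgroup of `X` permutes with `X`. -/
theorem mul_comm_of_forall_sylow {H X : Subgroup G}
    (h : ∀ (p : ℕ) [Fact p.Prime] (P : Sylow p X),
      (H : Set G) * (P.toSubgroup.map X.subtype : Subgroup G) =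
        ((P.toSubgroup.map X.subtype : Subgroup G) : Set G) * H) :
    (H : Set G) * X = (X : Set G) * H := by
  have hX : X = ⨆ (p : ℕ) (_ : Fact p.Prime) (P : Sylow p X), P.toSubgroup.map X.subtype := by
    simp only [← Subgroup.map_iSup, iSup_sylow_eq_top, ← MonoidHom.range_eq_map,
      Subgroup.range_subtype]
  rw [hX]
  exact mul_iSup_comm fun p => mul_iSup_comm fun hp => mul_iSup_comm fun P => h p P

/-- Subgroups of coprime orders permute as soon as subgroups of orders powers of distinct primes
do. -/
theorem isSemipermutable_of_isPGroup
    (h : ∀ (p q : ℕ) [Fact p.Prime] [Fact q.Prime], p ≠ q → ∀ A B : Subgroup G,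
      IsPGroup p A → IsPGroup q B → (A : Set G) * B = (B : Set G) * A)
    (H : Subgroup G) : IsSemipermutable H := by
  intro X hcop
  refine mul_comm_of_forall_sylow fun q hq Q => Eq.symm (mul_comm_of_forall_sylow fun p hp P => ?_)
  by_cases hpq : q = p
  · subst hpq
    by_cases hqH : q ∣ Nat.card H
    · have hqX : (Nat.card X).Coprime q := (hcop.coprime_dvd_left hqH).symm
      obtain ⟨n, hn⟩ := IsPGroup.iff_card.1 Q.isPGroup'
      have hQ : Q.toSubgroup = ⊥ := by
        rw [← Subgroup.card_eq_one]
        refine Nat.Coprime.eq_one_of_dvd ?_ Q.toSubgroup.card_subgroup_dvd_card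
        rw [hn]
        exact (hqX.pow_right n).symm
      simp [hQ]
    · obtain ⟨n, hn⟩ := IsPGroup.iff_card.1 P.isPGroup'
      have hP : P.toSubgroup = ⊥ := by
        rw [← Subgroup.card_eq_one]
        refine Nat.Coprime.eq_one_of_dvd ?_ P.toSubgroup.card_subgroup_dvd_card
        rw [hn]
        exact (((Nat.Prime.coprime_iff_not_dvd hq.out).2 hqH).pow_left n)
      simp [hP]
  · exact h q p hpq _ _ (Q.isPGroup'.map _) (P.isPGroup'.map _)

/-- If all subgroups are S-semipermutable, subgroups of orders powers of distinct primes permute. -/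
theorem mul_comm_of_forall_isSSemipermutable (h : ∀ H : Subgroup G, IsSSemipermutable H)
    {p q : ℕ} [hp : Fact p.Prime] [hq : Fact q.Prime] (hpq : p ≠ q) {A B : Subgroup G}
    (hA : IsPGroup p A) (hB : IsPGroup q B) : (A : Set G) * B = (B : Set G) * A := by
  obtain ⟨P, hAP⟩ := hA.exists_le_sylow
  obtain ⟨Q, hBQ⟩ := hB.exists_le_sylow
  have hAQ : (Nat.card A).Coprime (Nat.card Q) :=
    IsPGroup.coprime_card_of_ne p q hpq _ _ hA Q.isPGroup'
  have hBP : (Nat.card B).Coprime (Nat.card P) :=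
    IsPGroup.coprime_card_of_ne q p hpq.symm _ _ hB P.isPGroup'
  have hPQ : (Nat.card P).Coprime (Nat.card Q) :=
    IsPGroup.coprime_card_of_ne p q hpq _ _ P.isPGroup' Q.isPGroup'
  have hAB : (Nat.card A).Coprime (Nat.card B) := IsPGroup.coprime_card_of_ne p q hpq _ _ hA hB
  have not_dvd {r s : ℕ} [hr : Fact r.Prime] [hs : Fact s.Prime] (hrs : r ≠ s) {C : Subgroup G}
      (hC : IsPGroup r C) : ¬ s ∣ Nat.card C := by
    obtain ⟨n, hn⟩ := IsPGroup.iff_card.1 hC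
    rw [hn]
    exact fun hd => hrs ((Nat.prime_dvd_prime_iff_eq hs.out hr.out).1
      (hs.out.dvd_of_dvd_pow hd)).symm
  have hL := coe_sup_of_mul_comm (h A q (not_dvd hpq hA) Q)
  have hM := coe_sup_of_mul_comm (h B p (not_dvd hpq.symm hB) P)
  have hLcard : Nat.card (A ⊔ Q : Subgroup G) = Nat.card A * Nat.card Q := by
    rw [← ncard_coe_mul_coe_of_coprime hAQ, ← hL]; rfl
  have hMcard : Nat.card (B ⊔ P : Subgroup G) = Nat.card B * Nat.card P := by
    rw [← ncard_coe_mul_coe_of_coprime hBP, ← hM]; rfl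
  obtain ⟨m, hm⟩ := Subgroup.card_dvd_of_le hAP
  obtain ⟨n, hn⟩ := Subgroup.card_dvd_of_le hBQ
  have hdvd : Nat.card ((A ⊔ Q) ⊓ (B ⊔ P) : Subgroup G) ∣ Nat.card A * Nat.card B := by
    have hgcd := Nat.dvd_gcd
      (Subgroup.card_dvd_of_le (inf_le_left : (A ⊔ Q) ⊓ (B ⊔ P) ≤ A ⊔ (Q : Subgroup G)))
      (Subgroup.card_dvd_of_le (inf_le_right : (A ⊔ Q) ⊓ (B ⊔ P) ≤ B ⊔ (P : Subgroup G)))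
    have hmn : n.Coprime m :=
      ((hPQ.coprime_dvd_left (Dvd.intro_left _ hm.symm)).coprime_dvd_right
        (Dvd.intro_left _ hn.symm)).symm
    rwa [hLcard, hMcard, hm, hn, ← mul_assoc, ← mul_assoc, mul_comm (Nat.card B),
      Nat.gcd_mul_left, hmn.gcd_eq_one, mul_one] at hgcd
  refine mul_comm_of_coe_eq_mul (L := (A ⊔ Q) ⊓ (B ⊔ P)) (Eq.symm ?_)
  refine Set.eq_of_subset_of_ncard_le ?_ ?_
  · rintro _ ⟨a, ha, b, hb, rfl⟩
    exact mul_mem (Subgroup.mem_inf.2 ⟨Subgroup.mem_sup_left ha, Subgroup.mem_sup_right (hAP ha)⟩)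
      (Subgroup.mem_inf.2 ⟨Subgroup.mem_sup_right (hBQ hb), Subgroup.mem_sup_left hb⟩)
  · rw [ncard_coe_mul_coe_of_coprime hAB]
    exact Nat.le_of_dvd (Nat.mul_pos Nat.card_pos Nat.card_pos) hdvd

/-- An SS-permutable subgroup is S-semipermutable. -/
theorem IsSSPermutable.isSSemipermutable {H : Subgroup G} (h : IsSSPermutable H) :
    IsSSemipermutable H := by
  obtain ⟨K, hHK, hperm⟩ := h
  intro q hq hqH Q
  let R : Sylow q K := default
  have hindex : ¬ q ∣ (R.toSubgroup.map K.subtype).index := by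
    rw [Subgroup.index_map_subtype, hq.out.dvd_mul, not_or]
    exact ⟨R.not_dvd_index, fun hd => hqH (hd.trans (index_dvd_card_of_mul_eq_univ hHK))⟩
  let R' : Sylow q G := (R.isPGroup'.map K.subtype).toSylow hindex
  obtain ⟨g, hg⟩ := MulAction.exists_smul_eq G R' Q
  obtain ⟨a, ha, k, hk, rfl⟩ : g ∈ (H : Set G) * K := hHK ▸ Set.mem_univ g
  let S : Sylow q K := (⟨k, hk⟩ : K) • R
  have hS : S.toSubgroup.map K.subtype = MulAut.conj k • R.toSubgroup.map K.subtype := by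
    rw [Sylow.coe_subgroup_smul]
    exact (Subgroup.map_map _ K.subtype (MulAut.conj (⟨k, hk⟩ : K)).toMonoidHom).trans
      (Subgroup.map_map _ (MulAut.conj k).toMonoidHom K.subtype).symm
  have hQ : (Q : Subgroup G) = MulAut.conj a • S.toSubgroup.map K.subtype := by
    rw [← hg, hS]
    simp only [Sylow.coe_subgroup_smul, mul_smul]
    rfl
  have hH : MulAut.conj a • H = H := Subgroup.conj_smul_eq_self_of_mem ha
  have hcomm := congrArg (MulAut.conj a • ·) (hperm q S)
  simp only [smul_mul', ← Subgroup.coe_pointwise_smul, ← hQ, hH] at hcomm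
  exact hcomm

/-- A subgroup of prime power index is SS-permutable. -/
theorem isSSPermutable_of_index_eq_prime_pow {H : Subgroup G} {p n : ℕ} [hp : Fact p.Prime]
    (h : H.index = p ^ n) : IsSSPermutable H := by
  let P : Sylow p G := default
  have huniv : (H : Set G) * ((P : Subgroup G) : Set G) = Set.univ := by
    refine mul_eq_univ_of_coprime_index ?_
    rw [h]
    exact ((Nat.Prime.coprime_iff_not_dvd hp.out).2 P.not_dvd_index).pow_left n
  refine ⟨P, huniv, fun q hq Q => ?_⟩
  by_cases hqp : q = p
  · subst hqp
    have hQ : Q.toSubgroup = ⊤ := by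
      have hP : IsPGroup q (⊤ : Subgroup P) := P.isPGroup'.to_subgroup ⊤
      exact (Q.is_maximal' hP le_top).symm
    rw [hQ, ← MonoidHom.range_eq_map, Subgroup.range_subtype]
    refine mul_comm_of_coe_eq_mul (L := ⊤) ?_
    rw [huniv, Subgroup.coe_top]
  · have hQ : Q.toSubgroup = ⊥ := by
      rw [← Subgroup.card_eq_one]
      refine Nat.Coprime.eq_one_of_dvd ?_ Q.toSubgroup.card_subgroup_dvd_card
      exact IsPGroup.coprime_card_of_ne q p hqp _ _ Q.isPGroup' P.isPGroup'
    simp [hQ]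

/-- A nontrivial finite solvable group has a nontrivial normal subgroup of prime power order. -/
theorem exists_normal_isPGroup_ne_bot [Group.IsSolvable G] [Nontrivial G] :
    ∃ (p : ℕ) (_ : Fact p.Prime) (N : Subgroup G), N.Normal ∧ IsPGroup p N ∧ N ≠ ⊥ := by
  obtain ⟨D, hDn, hDbot, hDcomm⟩ : ∃ D : Subgroup G, D.Normal ∧ D ≠ ⊥ ∧ ⁅D, D⁆ = ⊥ := by
    have hex := Group.IsSolvable.solvable (G := G)
    classical
    obtain ⟨n, hn⟩ : ∃ n, Nat.find hex = n + 1 := by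
      refine Nat.exists_eq_succ_of_ne_zero fun h0 => ?_
      have h := Nat.find_spec hex
      rw [h0, derivedSeries_zero] at h
      exact top_ne_bot h
    refine ⟨derivedSeries G n, derivedSeries_normal G n, Nat.find_min hex (by omega), ?_⟩
    rw [← derivedSeries_succ, ← hn]
    exact Nat.find_spec hex
  have : IsMulCommutative D :=
    Subgroup.le_centralizer_iff_isMulCommutative.1
      (Subgroup.commutator_eq_bot_iff_le_centralizer.1 hDcomm)
  have hcard : Nat.card D ≠ 1 := fun h => hDbot (Subgroup.card_eq_one.1 h)
  obtain ⟨p, hp, hpD⟩ := Nat.exists_prime_and_dvd hcard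
  have hfact : Fact p.Prime := ⟨hp⟩
  let P : Sylow p D := default
  have hPn : P.toSubgroup.Normal := inferInstance
  have hPc : P.toSubgroup.Characteristic := P.characteristic_of_normal hPn
  refine ⟨p, hfact, P.toSubgroup.map D.subtype, inferInstance, P.isPGroup'.map _, fun h => ?_⟩
  rw [Subgroup.map_eq_bot_iff_of_injective _ D.subtype_injective] at h
  exact P.ne_bot_of_dvd_card hpD h

/-- The index of a subgroup in its join with a normal subgroup. -/
theorem relIndex_sup_eq_of_normal (M H : Subgroup G) [M.Normal] :
    H.relIndex (M ⊔ H) = H.relIndex M := by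
  refine Nat.eq_of_mul_eq_mul_left (Nat.card_pos (α := H)) ?_
  rw [← ncard_coe_mul_coe M H, ← Subgroup.normal_mul M H, ← Subgroup.relIndex_bot_left H,
    Subgroup.relIndex_mul_relIndex _ _ _ bot_le le_sup_right, Subgroup.relIndex_bot_left]
  rfl

/-- Every proper subgroup of a finite solvable group has prime power index in some larger
subgroup. -/
theorem exists_gt_relIndex_eq_prime_pow [Group.IsSolvable G] {H : Subgroup G} (hH : H ≠ ⊤) :
    ∃ (K : Subgroup G) (p n : ℕ), H < K ∧ p.Prime ∧ H.relIndex K = p ^ n := by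
  let C := H.normalCore
  have hC : C ≠ ⊤ := fun h => hH (top_le_iff.1 (h ▸ H.normalCore_le))
  have : Nontrivial (G ⧸ C) := QuotientGroup.nontrivial_iff.2 hC
  obtain ⟨p, hp, N, hN, hpN, hNbot⟩ := exists_normal_isPGroup_ne_bot (G := G ⧸ C)
  let M := N.comap (QuotientGroup.mk' C)
  have hMH : ¬ M ≤ H := fun h => hNbot <| by
    have hMC : M ≤ C := Subgroup.normal_le_normalCore.2 h
    rw [← Subgroup.map_comap_eq_self_of_surjective (QuotientGroup.mk'_surjective C) N,
      Subgroup.map_eq_bot_iff, QuotientGroup.ker_mk']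
    exact hMC
  have hCMcard : C.relIndex M = Nat.card N := by
    have hker := Subgroup.relIndex_ker M (QuotientGroup.mk' C)
    rwa [QuotientGroup.ker_mk',
      Subgroup.map_comap_eq_self_of_surjective (QuotientGroup.mk'_surjective C) N] at hker
  obtain ⟨n, hn⟩ := IsPGroup.iff_card.1 hpN
  have hsup : H.relIndex (H ⊔ M) ∣ p ^ n := by
    rw [sup_comm, relIndex_sup_eq_of_normal, ← hn, ← hCMcard]
    exact Subgroup.relIndex_dvd_of_le_left M H.normalCore_le
  obtain ⟨m, -, hm⟩ := (Nat.dvd_prime_pow hp.out).1 hsup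
  exact ⟨H ⊔ M, p, m, left_lt_sup.2 hMH, hp.out, hm⟩

/-- Every subgroup of a finite solvable SST-group is SS-permutable. -/
theorem IsSSTGroup.isSSPermutable [Group.IsSolvable G] (hG : IsSSTGroup G) (H : Subgroup G) :
    IsSSPermutable H := by
  induction H using WellFoundedGT.induction with
  | ind H ih =>
    by_cases hH : H = ⊤
    · subst hH
      exact isSSPermutable_of_index_eq_prime_pow (p := 2) (n := 0) (by simp)
    · obtain ⟨K, p, n, hHK, hp, hn⟩ := exists_gt_relIndex_eq_prime_pow hH
      have : Fact p.Prime := ⟨hp⟩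
      exact hG H K hHK.le (isSSPermutable_of_index_eq_prime_pow hn) (ih K hHK)

end Permuting

/-- Corollary 1.4: a finite solvable SST-group is a BT-group. -/
theorem solvable_sst_group_is_bt_group {G : Type*} [Group G] [Finite G]
    (hsol : IsSolvable G) (hsst : IsSSTGroup G) : IsBTGroup G := by
  have : Group.IsSolvable G := hsol
  intro H _ _ _ _
  exact isSemipermutable_of_isPGroup (fun p q _ _ hpq A B hA hB =>
    mul_comm_of_forall_isSSemipermutable
      (fun H => (hsst.isSSPermutable H).isSSemipermutable) hpq hA hB) H
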